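/- If Γ is infinite, then {((x_α)_{α∈Γ}, (y_α)_{α∈Γ}) ∈ 𝒳 × 𝒳 : the set {γ ∈ Γ : x_γ ≠ y_γ} is finite} ⊆ L(ℋ, 𝒳); that is, every pair of points of X^Γ differing at only finitely many coordinates is syndetically proximal for the group of generalized shift homeomorphisms. -/

import Mathlib

/-!
The number of coordinates at which two points differ is invariant under `ℋ`, and a bound on this
number passes to limits, because membership in a closure only tests finitely many coordinates at a
time (`mem_closure_pair_iff`). So every pair in the closure of the orbit of a pair with finite
difference set again has a finite difference set (`finite_diff_of_mem_closure`).

It remains to see that a pair `(x, y)` with finite difference set is proximal. Off that set, `x` and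
`y` agree, and by pigeonhole they take some common value `c` on an infinite set `A`. Any finite
`F ⊆ Γ` can be moved into `A` by a permutation `φ` of `Γ` (`exists_perm_mapsTo`), and then `x ∘ φ`
and `y ∘ φ` are both equal to `c` on `F`. Hence the pair of constant points `(c, c)` lies in the
closure of the orbit of `(x, y)`.
-/

open Set Topology

/-- The proximal relation of a semigroup `S` of self-maps of a space `Z`:
`(x, y)` is proximal iff the closure of `{(s x, s y) : s ∈ S}` meets the diagonal. -/
def proxRel {Z : Type*} [TopologicalSpace Z] (S : Set (Z → Z)) : Set (Z × Z) :=
  {p | ∃ z : Z, (z, z) ∈ closure {q : Z × Z | ∃ s ∈ S, q = (s p.1, s p.2)}}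

/-- The regionally proximal relation of a semigroup `S` of self-maps of a space `Z`:
`(x, y)` is regionally proximal iff there are nets `x_λ → x`, `y_λ → y` and `s_λ` in `S`
with `lim s_λ x_λ = lim s_λ y_λ`; equivalently, there is `z` such that `((x, y), (z, z))`
lies in the closure of `{((a, b), (s a, s b)) : s ∈ S, a b ∈ Z}`. -/
def regProxRel {Z : Type*} [TopologicalSpace Z] (S : Set (Z → Z)) : Set (Z × Z) :=
  {p | ∃ z : Z, (p, (z, z)) ∈
    closure {q : (Z × Z) × Z × Z | ∃ s ∈ S, ∃ a b : Z, q = ((a, b), (s a, s b))}}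

/-- The syndetically proximal relation of a group `T` of homeomorphisms of `Z`:
`(x, y)` is syndetically proximal iff the closure of the orbit `{(t x, t y) : t ∈ T}`
is contained in the proximal relation. -/
def synProxRel {Z : Type*} [TopologicalSpace Z] (T : Set (Z → Z)) : Set (Z × Z) :=
  {p | closure {q : Z × Z | ∃ t ∈ T, q = (t p.1, t p.2)} ⊆ proxRel T}

/-- `𝒮`: the semigroup of all generalized shifts `σ_φ (x) = x ∘ φ` on `X ^ Γ`. -/
def shiftSemigroup (X Γ : Type*) : Set ((Γ → X) → (Γ → X)) :=
  {f | ∃ φ : Γ → Γ, f = fun x => x ∘ φ}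

/-- `ℋ`: the group of generalized shift homeomorphisms `σ_φ` with `φ` bijective. -/
def shiftGroup (X Γ : Type*) : Set ((Γ → X) → (Γ → X)) :=
  {f | ∃ φ : Γ → Γ, Function.Bijective φ ∧ f = fun x => x ∘ φ}

/-- For discrete `X`, a pair lies in the closure of `S ⊆ X ^ Γ × X ^ Γ` iff it agrees with members
of `S` on every finite set of coordinates. -/
lemma mem_closure_pair_iff {X Γ : Type*} [TopologicalSpace X] [DiscreteTopology X]
    {S : Set ((Γ → X) × (Γ → X))} {p : (Γ → X) × (Γ → X)} :
    p ∈ closure S ↔ ∀ F : Finset Γ, ∃ q ∈ S, ∀ i ∈ F, q.1 i = p.1 i ∧ q.2 i = p.2 i := by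
  constructor
  · intro h F
    have hopen (u : Γ → X) : IsOpen ((F : Set Γ).pi fun i => {u i}) :=
      isOpen_set_pi F.finite_toSet fun _ _ => isOpen_discrete _
    obtain ⟨q, hq, hqS⟩ := mem_closure_iff.1 h _ ((hopen p.1).prod (hopen p.2))
      ⟨fun _ _ => rfl, fun _ _ => rfl⟩
    exact ⟨q, hqS, fun i hi => ⟨hq.1 i hi, hq.2 i hi⟩⟩
  · intro h
    classical
    rw [mem_closure_iff]
    intro U hU hp
    obtain ⟨V, W, hV, hW, hpV, hpW, hVW⟩ := isOpen_prod_iff.1 hU p.1 p.2 hp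
    obtain ⟨I, u, hu, hIV⟩ := isOpen_pi_iff.1 hV p.1 hpV
    obtain ⟨J, v, hv, hJW⟩ := isOpen_pi_iff.1 hW p.2 hpW
    obtain ⟨q, hqS, hq⟩ := h (I ∪ J)
    refine ⟨q, hVW ⟨hIV fun i hi => ?_, hJW fun i hi => ?_⟩, hqS⟩
    · rw [(hq i (Finset.mem_union_left _ hi)).1]
      exact (hu i hi).2
    · rw [(hq i (Finset.mem_union_right _ hi)).2]
      exact (hv i hi).2

/-- Holds because the permutations of `Γ` act `n`-transitively for every `n`. -/
lemma exists_perm_mapsTo {Γ : Type*} {A : Set Γ} (hA : A.Infinite) (F : Finset Γ) :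
    ∃ φ : Equiv.Perm Γ, ∀ i ∈ F, φ i ∈ A := by
  obtain ⟨G, hGA, hG⟩ := hA.exists_subset_card_eq F.card
  have := Equiv.Perm.isMultiplyPretransitive Γ F.card
  let a : Fin F.card ↪ Γ := F.equivFin.symm.toEmbedding.trans (Function.Embedding.subtype _)
  let b : Fin F.card ↪ Γ :=
    (G.equivFinOfCardEq hG).symm.toEmbedding.trans (Function.Embedding.subtype _)
  obtain ⟨φ, hφ⟩ := MulAction.exists_smul_eq (Equiv.Perm Γ) a b
  refine ⟨φ, fun i hi => ?_⟩
  have h := DFunLike.congr_fun hφ (F.equivFin ⟨i, hi⟩)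
  have h' : φ i = b (F.equivFin ⟨i, hi⟩) := by simpa [a] using h
  rw [h']
  exact hGA ((G.equivFinOfCardEq hG).symm _).2

lemma finite_diff_of_mem_closure {X Γ : Type*} [TopologicalSpace X] [DiscreteTopology X]
    {p q : (Γ → X) × (Γ → X)} (hp : {γ | p.1 γ ≠ p.2 γ}.Finite)
    (hq : q ∈ closure {r | ∃ t ∈ shiftGroup X Γ, r = (t p.1, t p.2)}) :
    {γ | q.1 γ ≠ q.2 γ}.Finite := by
  by_contra hinf
  -- An orbit element agreeing with `q` on more than `hp.toFinset.card` points of its difference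
  -- set would differ at too many coordinates.
  obtain ⟨G, hGq, hG⟩ := Set.Infinite.exists_subset_card_eq hinf (hp.toFinset.card + 1)
  obtain ⟨_, ⟨_, ⟨φ, hφ, rfl⟩, rfl⟩, h⟩ := mem_closure_pair_iff.1 hq G
  have hle : G.card ≤ hp.toFinset.card := by
    refine Finset.card_le_card_of_injOn φ (fun i hi => ?_) hφ.injective.injOn
    have h1 : p.1 (φ i) = q.1 i := (h i hi).1
    have h2 : p.2 (φ i) = q.2 i := (h i hi).2
    have h3 : q.1 i ≠ q.2 i := hGq hi
    simpa [h1, h2] using h3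
  omega

lemma mem_proxRel_of_finite_diff {X Γ : Type*} [TopologicalSpace X] [DiscreteTopology X]
    [Finite X] [Infinite Γ] {q : (Γ → X) × (Γ → X)} (hq : {γ | q.1 γ ≠ q.2 γ}.Finite) :
    q ∈ proxRel (shiftGroup X Γ) := by
  obtain ⟨c, hc⟩ : ∃ c, ({γ | q.1 γ ≠ q.2 γ}ᶜ ∩ q.1 ⁻¹' {c}).Infinite := by
    by_contra! h
    refine hq.infinite_compl ((Set.finite_iUnion h).subset fun γ hγ => ?_)
    exact Set.mem_iUnion.2 ⟨q.1 γ, hγ, rfl⟩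
  refine ⟨fun _ => c, mem_closure_pair_iff.2 fun F => ?_⟩
  obtain ⟨φ, hφ⟩ := exists_perm_mapsTo hc F
  refine ⟨_, ⟨_, ⟨φ, φ.bijective, rfl⟩, rfl⟩, fun i hi => ?_⟩
  obtain ⟨h1, h2⟩ := hφ i hi
  have h1 : q.1 (φ i) = q.2 (φ i) := by simpa using h1
  have h2 : q.1 (φ i) = c := h2
  exact ⟨h2, h1.symm.trans h2⟩

/-- for infinite `Γ`, every pair differing at only finitely many coordinates is
syndetically proximal for `(ℋ, 𝒳)`. -/
theorem finite_diff_subset_synProxRel_shiftGroup (X Γ : Type*) [TopologicalSpace X]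
    [DiscreteTopology X] [Finite X] [Nontrivial X] [Infinite Γ] :
    {p : (Γ → X) × (Γ → X) | {γ : Γ | p.1 γ ≠ p.2 γ}.Finite} ⊆
      synProxRel (shiftGroup X Γ) :=
  fun _ hp _ hq => mem_proxRel_of_finite_diff (finite_diff_of_mem_closure hp hq)
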